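/- Morrey inequality with tracked constant: for every integer m ≥ 2 there exists a constant C = C(m) such that for every exponent q ∈ (m, m+1) and every Lipschitz function g : B₁ → ℝ on the open unit ball B₁ ⊂ ℝᵐ, one has sup_{x,y ∈ B₁} |g(x) − g(y)| ≤ C · (q − m)^{−1+1/q} · ( ∫_{B₁} |∇g|^q )^{1/q}, where ∇g denotes the (almost everywhere defined) gradient of g. -/

import Mathlib

open MeasureTheory
open Metric Set Module
open scoped ENNReal NNReal

section Morrey

variable {E : Type*} [NormedAddCommGroup E] [NormedSpace ℝ E] [FiniteDimensional ℝ E]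
  [MeasurableSpace E] [BorelSpace E] (μ : Measure E) [μ.IsAddHaarMeasure]

/-- The integral of a power of the norm over a centred ball. -/
theorem lintegral_ball_norm_rpow [Nontrivial E] {a r : ℝ} (ha : 0 < finrank ℝ E + a)
    (hr : 0 < r) :
    ∫⁻ x in ball (0 : E) r, ENNReal.ofReal (‖x‖ ^ a) ∂μ =
      ENNReal.ofReal (finrank ℝ E * μ.real (ball 0 1) *
        (r ^ (finrank ℝ E + a) / (finrank ℝ E + a))) := by
  have hd : 1 ≤ finrank ℝ E := finrank_pos
  have hpow : ∀ y ∈ Ioo 0 r, y ^ (finrank ℝ E - 1) • y ^ a = y ^ (finrank ℝ E + a - 1) := by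
    intro y hy
    rw [smul_eq_mul, ← Real.rpow_natCast, ← Real.rpow_add hy.1]
    congr 1
    push_cast [hd]
    ring
  have hint : IntegrableOn (fun y : ℝ ↦ y ^ (finrank ℝ E + a - 1)) (Ioo 0 r) :=
    (intervalIntegral.integrableOn_Ioo_rpow_iff hr).2 (by linarith)
  have hintE : IntegrableOn (fun x : E ↦ ‖x‖ ^ a) (ball 0 r) μ :=
    (integrableOn_fun_norm_addHaar μ (f := fun y : ℝ ↦ y ^ a)).2
      (hint.congr_fun (fun y hy ↦ (hpow y hy).symm) measurableSet_Ioo)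
  rw [← ofReal_integral_eq_lintegral_ofReal hintE (.of_forall fun x ↦ by positivity)]
  congr 1
  have hind : ∀ x : E, (ball (0 : E) r).indicator (fun x ↦ ‖x‖ ^ a) x =
      (Iio r).indicator (fun y : ℝ ↦ y ^ a) ‖x‖ := by
    intro x
    simp [indicator]
  rw [← integral_indicator measurableSet_ball]
  simp_rw [hind]
  rw [integral_fun_norm_addHaar μ ((Iio r).indicator fun y : ℝ ↦ y ^ a), nsmul_eq_mul,
    smul_eq_mul, mul_assoc]
  congr 2
  have : ∀ y : ℝ, y ^ (finrank ℝ E - 1) • (Iio r).indicator (fun y : ℝ ↦ y ^ a) y =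
      (Iio r).indicator (fun y : ℝ ↦ y ^ (finrank ℝ E - 1) • y ^ a) y := by
    intro y; by_cases h : y < r <;> simp [h]
  simp_rw [this]
  rw [setIntegral_indicator measurableSet_Iio, Ioi_inter_Iio,
    setIntegral_congr_fun measurableSet_Ioo hpow, ← integral_Ioc_eq_integral_Ioo,
    ← intervalIntegral.integral_of_le hr.le, integral_rpow (.inl (by linarith))]
  rw [sub_add_cancel, Real.zero_rpow ha.ne', sub_zero]

/-- Change of variables under the homothety with centre `x` and ratio `t`. -/
theorem lintegral_comp_homothety (x : E) {t : ℝ} (ht : 0 < t) (φ : E → ℝ≥0∞) :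
    ∫⁻ z, φ (x + t • (z - x)) ∂μ = ENNReal.ofReal (t ^ (-(finrank ℝ E : ℝ))) * ∫⁻ w, φ w ∂μ := by
  rw [lintegral_sub_right_eq_self (fun z ↦ φ (x + t • z)) x]
  have h := (Homeomorph.smulOfNeZero t ht.ne').measurableEmbedding.lintegral_map
    (fun z : E ↦ φ (x + z)) (μ := μ)
  simp only [Homeomorph.smulOfNeZero_apply] at h
  rw [← h]
  change ∫⁻ z, φ (x + z) ∂(Measure.map (fun z : E ↦ t • z) μ) = _
  rw [Measure.map_addHaar_smul μ ht.ne', lintegral_smul_measure,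
    lintegral_add_left_eq_self φ x, smul_eq_mul, abs_of_pos (by positivity),
    Real.rpow_neg ht.le, Real.rpow_natCast]

/-- For almost every `z`, the increment of a Lipschitz function from `x` to `z` is controlled by the
integral of its gradient along the segment. -/
theorem LipschitzWith.ae_enorm_sub_le_lintegral_fderiv {K : ℝ≥0} {f : E → ℝ}
    (hf : LipschitzWith K f) (x : E) :
    ∀ᵐ z ∂μ, ‖f z - f x‖ₑ ≤
      ‖z - x‖ₑ * ∫⁻ t in Ioo (0 : ℝ) 1, ‖fderiv ℝ f (x + t • (z - x))‖ₑ := by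
  have hmeas : MeasurableSet {p : ℝ × E | DifferentiableAt ℝ f (x + p.1 • (p.2 - x))} :=
    (by fun_prop : Measurable fun p : ℝ × E ↦ x + p.1 • (p.2 - x))
      (measurableSet_of_differentiableAt ℝ f)
  have hae : ∀ᵐ z ∂μ, ∀ᵐ t ∂(volume.restrict (Ioo (0 : ℝ) 1)),
      DifferentiableAt ℝ f (x + t • (z - x)) := by
    refine (Measure.ae_ae_comm (μ := volume.restrict (Ioo (0 : ℝ) 1)) (ν := μ)
      (p := fun t z ↦ DifferentiableAt ℝ f (x + t • (z - x))) hmeas).1 ?_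
    filter_upwards [ae_restrict_mem measurableSet_Ioo] with t ht
    have h0 : ∫⁻ w, {w | ¬ DifferentiableAt ℝ f w}.indicator 1 w ∂μ = 0 := by
      rw [← compl_ofPred, lintegral_indicator_one (measurableSet_of_differentiableAt ℝ f).compl]
      exact hf.ae_differentiableAt
    have h1 := lintegral_comp_homothety μ x ht.1 ({w | ¬ DifferentiableAt ℝ f w}.indicator 1)
    rw [h0, mul_zero, lintegral_eq_zero_iff] at h1
    · filter_upwards [h1] with z hz
      by_contra hcon
      simp [hcon] at hz
    · exact (measurable_one.indicator (measurableSet_of_differentiableAt ℝ f).compl).comp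
        (by fun_prop)
  filter_upwards [hae] with z hz
  have hline : LipschitzWith (K * ‖z - x‖₊) fun t : ℝ ↦ f (x + t • (z - x)) := by
    refine hf.comp (LipschitzWith.of_dist_le_mul fun s t ↦ ?_)
    simp [dist_eq_norm, ← sub_smul, norm_smul, mul_comm]
  have hac : AbsolutelyContinuousOnInterval (fun t : ℝ ↦ f (x + t • (z - x))) 0 1 :=
    hline.lipschitzOnWith.absolutelyContinuousOnInterval
  have hftc := hac.integral_deriv_eq_sub
  simp only [one_smul, zero_smul, add_zero, add_sub_cancel] at hftc
  rw [← hftc, intervalIntegral.integral_of_le zero_le_one, integral_Ioc_eq_integral_Ioo,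
    ← lintegral_const_mul' _ _ enorm_ne_top]
  refine (enorm_integral_le_lintegral_enorm _).trans (lintegral_mono_ae ?_)
  filter_upwards [hz] with t ht
  have hd : HasDerivAt (fun t : ℝ ↦ x + t • (z - x)) (z - x) t := by
    simpa using ((hasDerivAt_id t).smul_const (z - x)).const_add x
  have := (ht.hasFDerivAt.comp_hasDerivAt t hd).deriv
  rw [Function.comp_def] at this
  rw [this, mul_comm]
  exact (fderiv ℝ f (x + t • (z - x))).le_opENorm _

theorem lintegral_Ioi_rpow_neg_le {d c : ℝ} (hd : 2 ≤ d) (hc : 0 < c) :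
    ∫⁻ t in Ioi c, ENNReal.ofReal (t ^ (-d)) ≤ ENNReal.ofReal (c ^ (1 - d)) := by
  rw [← ofReal_integral_eq_lintegral_ofReal (integrableOn_Ioi_rpow_of_lt (by linarith) hc)
    (by filter_upwards [ae_restrict_mem measurableSet_Ioi] with t ht
        exact Real.rpow_nonneg (hc.trans ht).le _),
    integral_Ioi_rpow_of_lt (by linarith) hc]
  refine ENNReal.ofReal_le_ofReal ?_
  rw [neg_div, ← div_neg, show -d + 1 = 1 - d by ring]
  exact div_le_self (by positivity) (by linarith)

/-- On the unit ball, the mean deviation of a Lipschitz function from its value at a point is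
controlled by the Riesz potential of its gradient. -/
theorem LipschitzWith.lintegral_enorm_sub_le_riesz {K : ℝ≥0} {f : E → ℝ}
    (hf : LipschitzWith K f) (hd : 2 ≤ finrank ℝ E) {x : E} (hx : x ∈ ball (0 : E) 1) :
    ∫⁻ z in ball (0 : E) 1, ‖f z - f x‖ₑ ∂μ ≤
      2 * ENNReal.ofReal (2 ^ ((finrank ℝ E : ℝ) - 1)) * ∫⁻ w in ball (0 : E) 1,
        ‖fderiv ℝ f w‖ₑ * ENNReal.ofReal (‖w - x‖ ^ (1 - (finrank ℝ E : ℝ))) ∂μ := by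
  have : Nontrivial E := nontrivial_of_finrank_pos (R := ℝ) (by lia)
  have hd' : (2 : ℝ) ≤ finrank ℝ E := by exact_mod_cast hd
  have hG : Measurable fun w ↦ ‖fderiv ℝ f w‖ₑ := (measurable_fderiv ℝ f).enorm
  have hdil : ∀ t ∈ Ioo (0 : ℝ) 1,
      ∫⁻ z in ball (0 : E) 1, ‖fderiv ℝ f (x + t • (z - x))‖ₑ ∂μ ≤
        ∫⁻ w in ball (0 : E) 1, ENNReal.ofReal (t ^ (-(finrank ℝ E : ℝ))) *
          (ball x (2 * t)).indicator (fun w ↦ ‖fderiv ℝ f w‖ₑ) w ∂μ := by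
    intro t ht
    rw [lintegral_const_mul' _ _ ENNReal.ofReal_ne_top, ← lintegral_indicator measurableSet_ball,
      ← lintegral_indicator measurableSet_ball, ← lintegral_comp_homothety μ x ht.1]
    refine lintegral_mono fun z ↦ ?_
    by_cases hz : z ∈ ball (0 : E) 1
    · have h1 : x + t • (z - x) ∈ ball (0 : E) 1 :=
        (convex_ball 0 1).add_smul_sub_mem hx hz ⟨ht.1.le, ht.2.le⟩
      have h2 : x + t • (z - x) ∈ ball x (2 * t) := by
        have : ‖z - x‖ < 2 := by
          have := _root_.norm_sub_le z x
          simp only [mem_ball_zero_iff] at hz hx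
          linarith
        rw [mem_ball_iff_norm, add_sub_cancel_left, norm_smul, Real.norm_of_nonneg ht.1.le]
        nlinarith [ht.1]
      rw [indicator_of_mem hz, indicator_of_mem h1, indicator_of_mem h2]
    · simp [hz]
  have hker : ∀ w, w ≠ x →
      ∫⁻ t in Ioo (0 : ℝ) 1, ENNReal.ofReal (t ^ (-(finrank ℝ E : ℝ))) *
          (ball x (2 * t)).indicator (fun w ↦ ‖fderiv ℝ f w‖ₑ) w ≤
        ENNReal.ofReal (2 ^ ((finrank ℝ E : ℝ) - 1)) * (‖fderiv ℝ f w‖ₑ *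
          ENNReal.ofReal (‖w - x‖ ^ (1 - (finrank ℝ E : ℝ)))) := by
    intro w hw
    have hpos : 0 < ‖w - x‖ := norm_pos_iff.2 (sub_ne_zero.2 hw)
    calc
      _ ≤ ∫⁻ t, ‖fderiv ℝ f w‖ₑ * (Ioi (‖w - x‖ / 2)).indicator
            (fun t ↦ ENNReal.ofReal (t ^ (-(finrank ℝ E : ℝ)))) t := by
        refine (setLIntegral_le_lintegral _ _).trans (lintegral_mono fun t ↦ ?_)
        by_cases ht : w ∈ ball x (2 * t)
        · have : t ∈ Ioi (‖w - x‖ / 2) := by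
            rw [mem_ball_iff_norm] at ht
            rw [mem_Ioi]; linarith
          rw [indicator_of_mem ht, indicator_of_mem this, mul_comm]
        · simp [ht]
      _ ≤ ‖fderiv ℝ f w‖ₑ * ENNReal.ofReal ((‖w - x‖ / 2) ^ (1 - (finrank ℝ E : ℝ))) := by
        rw [lintegral_const_mul' _ _ enorm_ne_top, lintegral_indicator measurableSet_Ioi]
        gcongr
        exact lintegral_Ioi_rpow_neg_le hd' (by positivity)
      _ = _ := by
        rw [mul_left_comm, ← ENNReal.ofReal_mul (by positivity),
          Real.div_rpow (norm_nonneg _) zero_le_two, div_eq_mul_inv, ← Real.rpow_neg zero_le_two,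
          neg_sub, mul_comm (_ ^ _)]
  calc
    _ ≤ ∫⁻ z in ball (0 : E) 1, (2 *
          ∫⁻ t in Ioo (0 : ℝ) 1, ‖fderiv ℝ f (x + t • (z - x))‖ₑ) ∂μ := by
      refine lintegral_mono_ae ?_
      filter_upwards [ae_restrict_mem measurableSet_ball,
        ae_restrict_of_ae (hf.ae_enorm_sub_le_lintegral_fderiv μ x)] with z hz h
      refine h.trans ?_
      gcongr
      rw [← ofReal_norm, ← ENNReal.ofReal_ofNat]
      refine ENNReal.ofReal_le_ofReal ?_
      have := _root_.norm_sub_le z x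
      simp only [mem_ball_zero_iff] at hz hx
      linarith
    _ = 2 * ∫⁻ t in Ioo (0 : ℝ) 1, ∫⁻ z in ball (0 : E) 1,
          ‖fderiv ℝ f (x + t • (z - x))‖ₑ ∂μ := by
      rw [lintegral_const_mul' _ _ (by simp), lintegral_lintegral_swap]
      exact (hG.comp (by fun_prop : Measurable fun p : E × ℝ ↦ x + p.2 • (p.1 - x))).aemeasurable
    _ ≤ 2 * ∫⁻ t in Ioo (0 : ℝ) 1, ∫⁻ w in ball (0 : E) 1,
          ENNReal.ofReal (t ^ (-(finrank ℝ E : ℝ))) *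
            (ball x (2 * t)).indicator (fun w ↦ ‖fderiv ℝ f w‖ₑ) w ∂μ := by
      gcongr 2 * ?_
      exact setLIntegral_mono' measurableSet_Ioo hdil
    _ = 2 * ∫⁻ w in ball (0 : E) 1, (∫⁻ t in Ioo (0 : ℝ) 1,
          ENNReal.ofReal (t ^ (-(finrank ℝ E : ℝ))) *
            (ball x (2 * t)).indicator (fun w ↦ ‖fderiv ℝ f w‖ₑ) w) ∂μ := by
      rw [lintegral_lintegral_swap]
      have hset : MeasurableSet {p : ℝ × E | dist p.2 x < 2 * p.1} :=
        measurableSet_lt (by fun_prop) (by fun_prop)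
      have hind := (hG.comp measurable_snd).indicator hset
      exact ((by fun_prop : Measurable fun p : ℝ × E ↦
        ENNReal.ofReal (p.1 ^ (-(finrank ℝ E : ℝ)))).mul hind).aemeasurable
    _ ≤ 2 * ∫⁻ w in ball (0 : E) 1, ENNReal.ofReal (2 ^ ((finrank ℝ E : ℝ) - 1)) *
          (‖fderiv ℝ f w‖ₑ * ENNReal.ofReal (‖w - x‖ ^ (1 - (finrank ℝ E : ℝ)))) ∂μ := by
      gcongr 2 * ?_
      refine lintegral_mono_ae (ae_restrict_of_ae ?_)
      filter_upwards [Measure.ae_ne μ x] with w hw using hker w hw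
    _ = _ := by
      rw [lintegral_const_mul' _ _ ENNReal.ofReal_ne_top, mul_assoc]

/-- Bound for the integral over the unit ball of the Riesz kernel to the conjugate power
`q / (q - 1)`. -/
theorem lintegral_riesz_kernel_rpow_le (hd : 2 ≤ finrank ℝ E) {q : ℝ}
    (hq : q ∈ Ioo (finrank ℝ E : ℝ) (finrank ℝ E + 1)) {x : E} (hx : x ∈ ball (0 : E) 1) :
    ∫⁻ w in ball (0 : E) 1,
        ENNReal.ofReal (‖w - x‖ ^ (1 - (finrank ℝ E : ℝ))) ^ q.conjExponent ∂μ ≤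
      ENNReal.ofReal (2 * finrank ℝ E ^ 2 * μ.real (ball 0 1) / (q - finrank ℝ E)) := by
  have : Nontrivial E := nontrivial_of_finrank_pos (R := ℝ) (by lia)
  have hd' : (2 : ℝ) ≤ finrank ℝ E := by exact_mod_cast hd
  obtain ⟨hq1, hq2⟩ := hq
  have hexp : finrank ℝ E + (1 - finrank ℝ E) * q.conjExponent =
      (q - finrank ℝ E) / (q - 1) := by
    have : q - 1 ≠ 0 := by linarith
    rw [Real.conjExponent]
    field_simp
    ring
  have hconj0 : 0 ≤ q.conjExponent := div_nonneg (by linarith) (by linarith)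
  have hexp_pos : 0 < (q - finrank ℝ E) / (q - 1) := div_pos (by linarith) (by linarith)
  have hexp_le : (q - finrank ℝ E) / (q - 1) ≤ 1 := (div_le_one (by linarith)).2 (by linarith)
  have hsub : ball (0 : E) 1 ⊆ ball x 2 := by
    intro w hw
    have := _root_.norm_sub_le w x
    rw [mem_ball_iff_norm]
    simp only [mem_ball_zero_iff] at hw hx
    linarith
  calc
    _ ≤ ∫⁻ w in ball x 2,
        ENNReal.ofReal (‖w - x‖ ^ ((1 - (finrank ℝ E : ℝ)) * q.conjExponent)) ∂μ := by
      refine (lintegral_mono_set hsub).trans_eq (lintegral_congr fun w ↦ ?_)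
      rw [ENNReal.ofReal_rpow_of_nonneg (by positivity) hconj0, ← Real.rpow_mul (norm_nonneg _)]
    _ = ∫⁻ v in ball (0 : E) 2,
        ENNReal.ofReal (‖v‖ ^ ((1 - (finrank ℝ E : ℝ)) * q.conjExponent)) ∂μ := by
      rw [← lintegral_indicator measurableSet_ball, ← lintegral_indicator measurableSet_ball,
        ← lintegral_sub_right_eq_self ((ball (0 : E) 2).indicator _) x]
      refine lintegral_congr fun w ↦ ?_
      simp [indicator, dist_eq_norm]
    _ ≤ _ := by
      rw [lintegral_ball_norm_rpow μ (by rw [hexp]; exact hexp_pos) two_pos, hexp]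
      refine ENNReal.ofReal_le_ofReal ?_
      have h2 : (2 : ℝ) ^ ((q - finrank ℝ E) / (q - 1)) ≤ 2 := by
        simpa using Real.rpow_le_rpow_of_exponent_le one_le_two hexp_le
      have hpos : 0 < q - finrank ℝ E := by linarith
      calc
        _ ≤ finrank ℝ E * μ.real (ball 0 1) * (2 / ((q - finrank ℝ E) / finrank ℝ E)) := by
          gcongr
          · linarith
          · linarith
        _ = _ := by field_simp

/-- The mean deviation of a Lipschitz function from its value at a point is controlled by the
`L^q` norm of its gradient, with explicit dependence on `q`. -/
theorem LipschitzWith.lintegral_enorm_sub_le_rpow {K : ℝ≥0} {f : E → ℝ}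
    (hf : LipschitzWith K f) (hd : 2 ≤ finrank ℝ E) {q : ℝ}
    (hq : q ∈ Ioo (finrank ℝ E : ℝ) (finrank ℝ E + 1)) {x : E} (hx : x ∈ ball (0 : E) 1) :
    ∫⁻ z in ball (0 : E) 1, ‖f z - f x‖ₑ ∂μ ≤
      ENNReal.ofReal (2 ^ (finrank ℝ E : ℝ) * (1 + 2 * finrank ℝ E ^ 2 * μ.real (ball 0 1)) *
        (q - finrank ℝ E) ^ (-1 + 1 / q) *
          (∫ z in ball (0 : E) 1, ‖fderiv ℝ f z‖ ^ q ∂μ) ^ (1 / q)) := by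
  have hd' : (2 : ℝ) ≤ finrank ℝ E := by exact_mod_cast hd
  have hq1 : 1 < q := by linarith [hq.1]
  have hq0 : 0 < q := by linarith
  have hqd : 0 < q - finrank ℝ E := sub_pos.2 hq.1
  have hconj : q.HolderConjugate q.conjExponent := .conjExponent hq1
  have hinv : 1 / q.conjExponent = 1 - 1 / q := by
    rw [one_div, one_div]; exact hconj.one_sub_inv.symm
  have hinv0 : 0 ≤ 1 - 1 / q := by
    rw [sub_nonneg, div_le_one hq0]; exact hq1.le
  have hG : Measurable fun w ↦ ‖fderiv ℝ f w‖ₑ := (measurable_fderiv ℝ f).enorm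
  have hint : IntegrableOn (fun z ↦ ‖fderiv ℝ f z‖ ^ q) (ball 0 1) μ := by
    refine Measure.integrableOn_of_bounded (M := K ^ q) measure_ball_lt_top.ne
      (((measurable_fderiv ℝ f).norm.pow_const q).aestronglyMeasurable) (.of_forall fun z ↦ ?_)
    rw [Real.norm_of_nonneg (by positivity)]
    exact Real.rpow_le_rpow (norm_nonneg _) (norm_fderiv_le_of_lipschitz ℝ hf) hq0.le
  have hgrad : ∫⁻ w in ball (0 : E) 1, ‖fderiv ℝ f w‖ₑ ^ q ∂μ =
      ENNReal.ofReal (∫ z in ball (0 : E) 1, ‖fderiv ℝ f z‖ ^ q ∂μ) := by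
    rw [ofReal_integral_eq_lintegral_ofReal hint (.of_forall fun z ↦ by positivity)]
    refine lintegral_congr fun z ↦ ?_
    rw [← ofReal_norm, ENNReal.ofReal_rpow_of_nonneg (norm_nonneg _) hq0.le]
  have hI : 0 ≤ ∫ z in ball (0 : E) 1, ‖fderiv ℝ f z‖ ^ q ∂μ :=
    integral_nonneg fun z ↦ by positivity
  have hkernel :
      (2 * finrank ℝ E ^ 2 * μ.real (ball (0 : E) 1) / (q - finrank ℝ E)) ^ (1 - 1 / q) ≤
      (1 + 2 * finrank ℝ E ^ 2 * μ.real (ball (0 : E) 1)) * (q - finrank ℝ E) ^ (-1 + 1 / q) := by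
    rw [Real.div_rpow (by positivity) hqd.le, div_eq_mul_inv, ← Real.rpow_neg hqd.le,
      show -(1 - 1 / q) = -1 + 1 / q by ring]
    gcongr
    calc
      _ ≤ (1 + 2 * finrank ℝ E ^ 2 * μ.real (ball (0 : E) 1)) ^ (1 - 1 / q) := by
        gcongr; linarith
      _ ≤ (1 + 2 * finrank ℝ E ^ 2 * μ.real (ball (0 : E) 1)) ^ (1 : ℝ) := by
        refine Real.rpow_le_rpow_of_exponent_le ?_ (sub_le_self _ (by positivity))
        exact le_add_of_nonneg_right (by positivity)
      _ = _ := Real.rpow_one _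
  calc
    _ ≤ 2 * ENNReal.ofReal (2 ^ ((finrank ℝ E : ℝ) - 1)) *
        ((∫⁻ w in ball (0 : E) 1, ‖fderiv ℝ f w‖ₑ ^ q ∂μ) ^ (1 / q) *
          (∫⁻ w in ball (0 : E) 1, ENNReal.ofReal (‖w - x‖ ^ (1 - (finrank ℝ E : ℝ))) ^
            q.conjExponent ∂μ) ^ (1 / q.conjExponent)) := by
      refine (hf.lintegral_enorm_sub_le_riesz μ hd hx).trans ?_
      gcongr
      exact ENNReal.lintegral_mul_le_Lp_mul_Lq _ hconj hG.aemeasurable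
        (by fun_prop : Measurable fun w ↦
          ENNReal.ofReal (‖w - x‖ ^ (1 - (finrank ℝ E : ℝ)))).aemeasurable
    _ ≤ 2 * ENNReal.ofReal (2 ^ ((finrank ℝ E : ℝ) - 1)) *
        (ENNReal.ofReal (∫ z in ball (0 : E) 1, ‖fderiv ℝ f z‖ ^ q ∂μ) ^ (1 / q) *
          ENNReal.ofReal (2 * finrank ℝ E ^ 2 * μ.real (ball (0 : E) 1) / (q - finrank ℝ E)) ^
            (1 - 1 / q)) := by
      rw [hgrad, hinv]
      gcongr
      exact lintegral_riesz_kernel_rpow_le μ hd hq hx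
    _ = ENNReal.ofReal (2 ^ (finrank ℝ E : ℝ) *
        ((∫ z in ball (0 : E) 1, ‖fderiv ℝ f z‖ ^ q ∂μ) ^ (1 / q) *
          (2 * finrank ℝ E ^ 2 * μ.real (ball (0 : E) 1) / (q - finrank ℝ E)) ^ (1 - 1 / q))) := by
      rw [ENNReal.ofReal_rpow_of_nonneg hI (by positivity),
        ENNReal.ofReal_rpow_of_nonneg (by positivity) hinv0, ← ENNReal.ofReal_ofNat,
        ← ENNReal.ofReal_mul (by positivity), ← ENNReal.ofReal_mul (by positivity),
        ← ENNReal.ofReal_mul (by positivity), ← Real.rpow_one_add' (by positivity) (by linarith),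
        add_sub_cancel]
    _ ≤ _ := by
      refine ENNReal.ofReal_le_ofReal ?_
      rw [mul_comm (_ ^ (1 / q)), ← mul_assoc, mul_assoc (2 ^ _) (1 + _)]
      gcongr

/-- Morrey's inequality on the unit ball for globally Lipschitz functions, with an explicit
constant. -/
theorem LipschitzWith.abs_sub_le_morrey {K : ℝ≥0} {f : E → ℝ}
    (hf : LipschitzWith K f) (hd : 2 ≤ finrank ℝ E) {q : ℝ}
    (hq : q ∈ Ioo (finrank ℝ E : ℝ) (finrank ℝ E + 1)) {x y : E} (hx : x ∈ ball (0 : E) 1)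
    (hy : y ∈ ball (0 : E) 1) :
    |f x - f y| ≤
      2 * 2 ^ (finrank ℝ E : ℝ) * (1 + 2 * finrank ℝ E ^ 2 * μ.real (ball (0 : E) 1)) /
        μ.real (ball (0 : E) 1) * (q - finrank ℝ E) ^ (-1 + 1 / q) *
          (∫ z in ball (0 : E) 1, ‖fderiv ℝ f z‖ ^ q ∂μ) ^ (1 / q) := by
  have hvol : 0 < μ.real (ball (0 : E) 1) :=
    ENNReal.toReal_pos (measure_ball_pos μ 0 one_pos).ne' measure_ball_lt_top.ne
  set R : ℝ := 2 ^ (finrank ℝ E : ℝ) * (1 + 2 * finrank ℝ E ^ 2 * μ.real (ball (0 : E) 1)) *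
    (q - finrank ℝ E) ^ (-1 + 1 / q) *
      (∫ z in ball (0 : E) 1, ‖fderiv ℝ f z‖ ^ q ∂μ) ^ (1 / q) with hR
  have hqd : 0 < q - finrank ℝ E := sub_pos.2 hq.1
  have hI : 0 ≤ ∫ z in ball (0 : E) 1, ‖fderiv ℝ f z‖ ^ q ∂μ :=
    integral_nonneg fun z ↦ by positivity
  have hR0 : 0 ≤ R := by positivity
  have key : ENNReal.ofReal (|f x - f y| * μ.real (ball (0 : E) 1)) ≤ ENNReal.ofReal (R + R) :=
    calc
      _ = ∫⁻ _ in ball (0 : E) 1, ‖f x - f y‖ₑ ∂μ := by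
        rw [setLIntegral_const, ENNReal.ofReal_mul (abs_nonneg _), ← Real.norm_eq_abs, ofReal_norm,
          ofReal_measureReal measure_ball_lt_top.ne]
      _ ≤ ∫⁻ z in ball (0 : E) 1, (‖f z - f x‖ₑ + ‖f z - f y‖ₑ) ∂μ := by
        refine lintegral_mono fun z ↦ ?_
        rw [enorm_sub_rev (f z) (f x), ← sub_add_sub_cancel (f x) (f z) (f y)]
        exact enorm_add_le _ _
      _ ≤ _ := by
        have hmeas : Measurable fun z ↦ ‖f z - f x‖ₑ :=
          (hf.continuous.measurable.sub_const _).enorm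
        rw [lintegral_add_left hmeas, ENNReal.ofReal_add hR0 hR0]
        exact add_le_add (hf.lintegral_enorm_sub_le_rpow μ hd hq hx)
          (hf.lintegral_enorm_sub_le_rpow μ hd hq hy)
  rw [ENNReal.ofReal_le_ofReal_iff (by positivity), ← le_div_iff₀ hvol] at key
  refine key.trans_eq ?_
  rw [hR]
  ring

end Morrey

/-- Morrey inequality with tracked constant: for every integer `m ≥ 2` there is a constant
`C = C(m)` such that for every exponent `q ∈ (m, m+1)` and every Lipschitz function
`g` on the open unit ball `B₁ ⊂ ℝᵐ`,
`|g(x) − g(y)| ≤ C·(q−m)^{−1+1/q}·(∫_{B₁} |∇g|^q)^{1/q}` for all `x, y ∈ B₁`. -/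
theorem morrey_tracked_constant (m : ℕ) (hm : 2 ≤ m) :
    ∃ C : ℝ, 0 < C ∧
      ∀ q : ℝ, q ∈ Set.Ioo (m : ℝ) (m + 1) →
        ∀ (g : EuclideanSpace ℝ (Fin m) → ℝ) (K : NNReal),
          LipschitzOnWith K g (Metric.ball 0 1) →
          ∀ x ∈ Metric.ball (0 : EuclideanSpace ℝ (Fin m)) 1,
            ∀ y ∈ Metric.ball (0 : EuclideanSpace ℝ (Fin m)) 1,
              |g x - g y| ≤
                C * (q - m) ^ (-1 + 1 / q) *
                  (∫ z in Metric.ball (0 : EuclideanSpace ℝ (Fin m)) 1,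
                      ‖fderiv ℝ g z‖ ^ q) ^ (1 / q) := by
  have hvol : 0 < volume.real (ball (0 : EuclideanSpace ℝ (Fin m)) 1) :=
    ENNReal.toReal_pos (measure_ball_pos _ 0 one_pos).ne' measure_ball_lt_top.ne
  refine ⟨2 * 2 ^ (m : ℝ) * (1 + 2 * m ^ 2 * volume.real (ball (0 : EuclideanSpace ℝ (Fin m)) 1)) /
    volume.real (ball (0 : EuclideanSpace ℝ (Fin m)) 1), by positivity, ?_⟩
  intro q hq g K hg x hx y hy
  obtain ⟨f, hf, hfg⟩ := hg.extend_real
  have hgrad : ∫ z in ball (0 : EuclideanSpace ℝ (Fin m)) 1, ‖fderiv ℝ g z‖ ^ q =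
      ∫ z in ball (0 : EuclideanSpace ℝ (Fin m)) 1, ‖fderiv ℝ f z‖ ^ q := by
    refine setIntegral_congr_fun measurableSet_ball fun z hz ↦ ?_
    simp only [(hfg.eventuallyEq_of_mem (isOpen_ball.mem_nhds hz)).fderiv_eq]
  rw [hgrad, hfg hx, hfg hy]
  have h := hf.abs_sub_le_morrey volume (q := q) (by simpa using hm) (by simpa using hq) hx hy
  simpa only [finrank_euclideanSpace_fin] using h
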